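/- Furstenberg's theorem: let p₁ and p₂ be two distinct primes and let F be a closed subset of the circle 𝕋 = ℝ/ℤ that is invariant under the maps x ↦ p₁·x and x ↦ p₂·x (i.e., p₁·F ⊆ F and p₂·F ⊆ F). Then either F is a finite set consisting of rational points (images of rational numbers in ℝ/ℤ), or F = 𝕋. -/

import Mathlib

theorem exists_nat_combination_mem_Ico {α β : ℝ} (hα : 0 < α)
    (h : Irrational (α / β)) {δ : ℝ} (hδ : 0 < δ) :
    ∃ N : ℝ, ∀ τ, N ≤ τ → ∃ m n : ℕ, (m * α + n * β : ℝ) ∈ Set.Ico τ (τ + δ) := by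
  obtain ⟨η, hη, ⟨hη0, hηδ⟩⟩ := (dense_addSubgroupClosure_pair_iff.2 h).exists_between hδ
  obtain ⟨k, l, rfl⟩ := AddSubgroup.mem_closure_pair.1 hη
  simp only [zsmul_eq_mul] at hη0 hηδ
  set η : ℝ := k * α + l * β
  set K : ℕ := ⌈α / η⌉₊
  set M : ℕ := K * (k.natAbs + l.natAbs)
  refine ⟨M * (α + β), fun τ hτ => ?_⟩
  set i : ℕ := ⌊(τ - M * (α + β)) / α⌋₊
  have hi1 : i * α ≤ τ - M * (α + β) :=
    (le_div_iff₀ hα).1 (Nat.floor_le (div_nonneg (by linarith) hα.le))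
  have hi2 : τ - M * (α + β) < (i + 1) * α := (div_lt_iff₀ hα).1 (Nat.lt_floor_add_one _)
  set r : ℝ := τ - M * (α + β) - i * α
  set j : ℕ := ⌈r / η⌉₊ with hj
  have hj1 : r ≤ j * η := (div_le_iff₀ hη0).1 (Nat.le_ceil _)
  have hj2 : j * η < r + η := by
    have := Nat.ceil_lt_add_one (div_nonneg (show 0 ≤ r by linarith) hη0.le)
    rw [← hj] at this
    have h2 := mul_lt_mul_of_pos_right this hη0
    rwa [add_mul, div_mul_cancel₀ _ hη0.ne', one_mul] at h2
  have hjK : j ≤ K := Nat.ceil_mono (div_le_div_of_nonneg_right (by linarith) hη0.le)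
  have bound (c : ℤ) (hc : c.natAbs ≤ k.natAbs + l.natAbs) : 0 ≤ (M : ℤ) + j * c := by
    have h1 : j * c.natAbs ≤ M := Nat.mul_le_mul hjK hc
    have h2 : (j : ℤ) * |c| ≤ M := by rw [Int.abs_eq_natAbs]; exact_mod_cast h1
    nlinarith [neg_abs_le c]
  obtain ⟨m, hm⟩ := Int.eq_ofNat_of_zero_le (bound k (by omega))
  obtain ⟨n, hn⟩ := Int.eq_ofNat_of_zero_le (bound l (by omega))
  have hm' : (M : ℝ) + j * k = m := by exact_mod_cast hm
  have hn' : (M : ℝ) + j * l = n := by exact_mod_cast hn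
  refine ⟨m + i, n, ?_⟩
  have : ((m + i : ℕ) * α + n * β : ℝ) = M * (α + β) + i * α + j * η := by
    rw [Nat.cast_add, ← hm', ← hn']; ring
  rw [this]
  constructor <;> linarith

theorem exists_pow_mul_pow_mem_Ico {a b : ℕ} (ha : 1 < a) (hb : 1 < b)
    (h : Irrational (Real.log a / Real.log b)) {δ : ℝ} (hδ : 0 < δ) :
    ∃ N : ℝ, 0 < N ∧ ∀ T, N ≤ T →
      ∃ m n : ℕ, ((a ^ m * b ^ n : ℕ) : ℝ) ∈ Set.Ico T (T * (1 + δ)) := by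
  obtain ⟨N, hN⟩ := exists_nat_combination_mem_Ico
    (Real.log_pos (by exact_mod_cast ha)) h
    (Real.log_pos (show 1 < 1 + δ by linarith))
  refine ⟨Real.exp N, Real.exp_pos _, fun T hT => ?_⟩
  have hT0 : 0 < T := (Real.exp_pos _).trans_le hT
  obtain ⟨m, n, h1, h2⟩ := hN (Real.log T) ((Real.le_log_iff_exp_le hT0).2 hT)
  have ha0 : (0 : ℝ) < a := by positivity
  have hb0 : (0 : ℝ) < b := by positivity
  have hlog : (m * Real.log a + n * Real.log b : ℝ) = Real.log ((a ^ m * b ^ n : ℕ) : ℝ) := by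
    push_cast
    rw [Real.log_mul (by positivity) (by positivity), Real.log_pow, Real.log_pow]
  have hs : (0 : ℝ) < ((a ^ m * b ^ n : ℕ) : ℝ) := by positivity
  rw [hlog] at h1 h2
  rw [← Real.log_mul hT0.ne' (by positivity)] at h2
  exact ⟨m, n, (Real.log_le_log_iff hT0 hs).1 h1,
    (Real.log_lt_log_iff hs (by positivity)).1 h2⟩

theorem irrational_log_div_log {p q : ℕ} (hp : p.Prime) (hq : q.Prime) (hpq : p ≠ q) :
    Irrational (Real.log p / Real.log q) := by
  have hlp : 0 < Real.log p := Real.log_pos (by exact_mod_cast hp.one_lt)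
  have hlq : 0 < Real.log q := Real.log_pos (by exact_mod_cast hq.one_lt)
  rintro ⟨r, hr⟩
  have hr0 : 0 < r := by
    have : (0 : ℝ) < r := hr ▸ div_pos hlp hlq
    exact_mod_cast this
  obtain ⟨k, hk⟩ := Int.eq_ofNat_of_zero_le (Rat.num_pos.2 hr0).le
  have hrk : (r : ℝ) * r.den = k := by
    have := Rat.mul_den_eq_num r
    rw [hk] at this
    exact_mod_cast this
  have hlog : (r.den : ℝ) * Real.log p = k * Real.log q := by
    rw [← hrk, hr]; field_simp
  rw [← Real.log_pow, ← Real.log_pow] at hlog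
  have hp0 : (0 : ℝ) < p := by exact_mod_cast hp.pos
  have hq0 : (0 : ℝ) < q := by exact_mod_cast hq.pos
  have h := Real.log_injOn_pos (Set.mem_Ioi.2 (pow_pos hp0 _)) (Set.mem_Ioi.2 (pow_pos hq0 _)) hlog
  have h' : p ^ r.den = q ^ k := by exact_mod_cast h
  have : p ∣ q ^ k := h' ▸ dvd_pow_self p r.den_nz
  exact hpq ((Nat.prime_dvd_prime_iff_eq hp hq).1 (hp.dvd_of_dvd_pow this))

theorem irrational_log_pow_div_log_pow {p q : ℕ} (hp : p.Prime) (hq : q.Prime) (hpq : p ≠ q)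
    {u : ℕ} (hu : u ≠ 0) : Irrational (Real.log (p ^ u : ℕ) / Real.log (q ^ u : ℕ)) := by
  have hu' : (u : ℝ) ≠ 0 := by exact_mod_cast hu
  push_cast
  rw [Real.log_pow, Real.log_pow, mul_div_mul_left _ _ hu']
  exact irrational_log_div_log hp hq hpq

theorem accPt_principal_iff_norm {E : Type*} [SeminormedAddCommGroup E] {A : Set E} {x : E} :
    AccPt x (Filter.principal A) ↔ ∀ ε > 0, ∃ y ∈ A, y ≠ x ∧ ‖y - x‖ < ε := by
  rw [accPt_iff_nhds]
  constructor
  · intro h ε hε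
    obtain ⟨y, ⟨hyx, hyA⟩, hne⟩ := h _ (Metric.ball_mem_nhds x hε)
    exact ⟨y, hyA, hne, by rwa [mem_ball_iff_norm] at hyx⟩
  · intro h U hU
    obtain ⟨ε, hε, hεU⟩ := Metric.mem_nhds_iff.1 hU
    obtain ⟨y, hyA, hne, hy⟩ := h ε hε
    exact ⟨y, ⟨hεU (mem_ball_iff_norm.2 hy), hyA⟩, hne⟩

namespace UnitAddCircle

theorem norm_coe_le_abs (x : ℝ) : ‖(x : UnitAddCircle)‖ ≤ |x| := by
  rw [UnitAddCircle.norm_eq]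
  simpa using round_le x 0

theorem exists_coe_eq_abs_eq_norm (x : UnitAddCircle) :
    ∃ r : ℝ, (r : UnitAddCircle) = x ∧ |r| = ‖x‖ := by
  obtain ⟨r, rfl⟩ := QuotientAddGroup.mk_surjective x
  have h : ((r - round r : ℝ) : UnitAddCircle) = (r : UnitAddCircle) := by
    rw [AddCircle.coe_sub, sub_eq_self, AddCircle.coe_eq_zero_iff]
    exact ⟨round r, by simp⟩
  exact ⟨r - round r, h, UnitAddCircle.norm_eq.symm⟩

theorem coe_natCast_mul (n : ℕ) (r : ℝ) :
    ((n * r : ℝ) : UnitAddCircle) = n • (r : UnitAddCircle) := by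
  rw [← nsmul_eq_mul, AddCircle.coe_nsmul]

theorem nsmul_ne_zero_of_norm_lt {n : ℕ} {x : UnitAddCircle} (hx : x ≠ 0) (h : n * ‖x‖ < 1)
    (hn : n ≠ 0) : n • x ≠ 0 := by
  obtain ⟨r, rfl, hr⟩ := exists_coe_eq_abs_eq_norm x
  intro h0
  rw [← coe_natCast_mul, AddCircle.coe_eq_zero_iff] at h0
  obtain ⟨k, hk⟩ := h0
  simp only [zsmul_eq_mul, mul_one] at hk
  rw [← hr, ← Nat.abs_cast, ← abs_mul, ← hk] at h
  have hk0 : k = 0 := Int.abs_lt_one_iff.1 (by exact_mod_cast h)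
  rw [hk0, Int.cast_zero, eq_comm, mul_eq_zero] at hk
  rcases hk with hk | hk
  · exact hn (by exact_mod_cast hk)
  · exact hx (by rw [hk, AddCircle.coe_zero])

theorem exists_rat_of_nsmul_eq_zero {n : ℕ} (hn : n ≠ 0) {x : UnitAddCircle} (h : n • x = 0) :
    ∃ r : ℚ, ((r : ℝ) : UnitAddCircle) = x := by
  obtain ⟨r, rfl⟩ := QuotientAddGroup.mk_surjective x
  obtain ⟨k, hk⟩ := (AddCircle.coe_eq_zero_iff (1 : ℝ)).1 ((coe_natCast_mul n r).trans h)
  have hn' : (n : ℝ) ≠ 0 := by exact_mod_cast hn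
  refine ⟨k / n, congrArg _ ?_⟩
  push_cast
  rw [div_eq_iff hn', mul_comm r, ← hk]
  simp

end UnitAddCircle

open UnitAddCircle

theorem nsmul_pow_mul_pow_mem {M : Type*} [AddMonoid M] {A : Set M} {a b : ℕ}
    (ha : ∀ x ∈ A, a • x ∈ A) (hb : ∀ x ∈ A, b • x ∈ A) (m n : ℕ) :
    ∀ x ∈ A, (a ^ m * b ^ n) • x ∈ A := by
  induction m with
  | zero =>
    induction n with
    | zero => simp
    | succ n ih =>
      intro x hx
      rw [pow_succ, ← mul_assoc, mul_nsmul']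
      exact ih _ (hb x hx)
  | succ m ih =>
    intro x hx
    rw [pow_succ, mul_right_comm, mul_nsmul']
    exact ih _ (ha x hx)

theorem nsmul_pow_mem {M : Type*} [AddMonoid M] {A : Set M} {a : ℕ}
    (ha : ∀ x ∈ A, a • x ∈ A) (m : ℕ) : ∀ x ∈ A, a ^ m • x ∈ A := by
  simpa using nsmul_pow_mul_pow_mem ha ha m 0

theorem nsmul_mem_derivedSet {A : Set UnitAddCircle} {n : ℕ} (hn : n ≠ 0)
    (hA : ∀ x ∈ A, n • x ∈ A) : ∀ x ∈ derivedSet A, n • x ∈ derivedSet A := by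
  intro x hx
  rw [mem_derivedSet, accPt_principal_iff_norm] at hx ⊢
  intro ε hε
  have hn0 : (0 : ℝ) < n := by positivity
  obtain ⟨y, hyA, hyx, hy⟩ := hx (min ε 1 / n) (by positivity)
  rw [lt_div_iff₀ hn0, mul_comm, lt_min_iff] at hy
  refine ⟨n • y, hA y hyA, ?_, ?_⟩
  · rw [← sub_ne_zero, ← nsmul_sub]
    exact nsmul_ne_zero_of_norm_lt (sub_ne_zero.2 hyx) hy.2 hn
  · rw [← nsmul_sub]
    exact (norm_nsmul_le.trans_eq (by simp)).trans_lt hy.1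

theorem exists_nsmul_eq_zero_of_finite {G : Type*} [AddGroup G] {A : Set G} (hA : A.Finite)
    {a : ℕ} (ha : 1 < a) (hinv : ∀ x ∈ A, a • x ∈ A) {x : G} (hx : x ∈ A) :
    ∃ n : ℕ, n ≠ 0 ∧ n • x = 0 := by
  obtain ⟨m, -, n, -, hmn, h⟩ := Set.infinite_univ.exists_lt_map_eq_of_mapsTo
    (f := fun m : ℕ => a ^ m • x) (fun m _ => nsmul_pow_mem hinv m x hx) hA
  have hlt : a ^ m < a ^ n := Nat.pow_lt_pow_right ha hmn
  refine ⟨a ^ n - a ^ m, by omega, ?_⟩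
  have h' : (a ^ n - a ^ m) • x + a ^ m • x = a ^ m • x := by
    rw [← add_nsmul, Nat.sub_add_cancel hlt.le]; exact h.symm
  simpa using h'

/-- Multiples of a small positive number by the semigroup generated by `a` and `b` come
uniformly close to every point of the circle. -/
theorem exists_norm_nsmul_sub_lt {a b : ℕ} (ha : 1 < a) (hb : 1 < b)
    (h : Irrational (Real.log a / Real.log b)) {ε : ℝ} (hε : 0 < ε) :
    ∃ η > 0, ∀ x : ℝ, 0 < x → x < η → ∀ y : UnitAddCircle,
      ∃ m n : ℕ, ‖(a ^ m * b ^ n) • (x : UnitAddCircle) - y‖ < ε := by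
  obtain ⟨N, hN0, hN⟩ := exists_pow_mul_pow_mem_Ico ha hb h (half_pos hε)
  refine ⟨1 / N, by positivity, fun x hx0 hxN y => ?_⟩
  obtain ⟨z, ⟨hz0, hz1⟩, rfl⟩ := AddCircle.eq_coe_Ico y
  have hxN' : x * N < 1 := (lt_div_iff₀ hN0).1 hxN
  obtain ⟨m, n, h1, h2⟩ := hN ((z + 1) / x) (by rw [le_div_iff₀ hx0]; linarith)
  refine ⟨m, n, ?_⟩
  rw [div_le_iff₀ hx0] at h1
  rw [div_mul_eq_mul_div, lt_div_iff₀ hx0] at h2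
  set s : ℕ := a ^ m * b ^ n
  have hz : (z : UnitAddCircle) = ((z + 1 : ℝ) : UnitAddCircle) := by
    rw [AddCircle.coe_add, AddCircle.coe_period, add_zero]
  rw [hz, ← coe_natCast_mul, ← AddCircle.coe_sub]
  refine (norm_coe_le_abs _).trans_lt ?_
  rw [abs_lt]
  constructor <;> nlinarith

theorem eq_univ_of_accPt_zero {a b : ℕ} (ha : 1 < a) (hb : 1 < b)
    (h : Irrational (Real.log a / Real.log b)) {A : Set UnitAddCircle} (hA : IsClosed A)
    (hinva : ∀ x ∈ A, a • x ∈ A) (hinvb : ∀ x ∈ A, b • x ∈ A)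
    (h0 : AccPt 0 (Filter.principal A)) : A = Set.univ := by
  refine Set.eq_univ_of_forall fun y => ?_
  rw [← hA.closure_eq, Metric.mem_closure_iff]
  intro ε hε
  obtain ⟨η, hη, H⟩ := exists_norm_nsmul_sub_lt ha hb h hε
  obtain ⟨x, hxA, hx0, hx⟩ := accPt_principal_iff_norm.1 h0 η hη
  rw [sub_zero] at hx
  suffices ∃ m n : ℕ, ‖(a ^ m * b ^ n) • x - y‖ < ε by
    obtain ⟨m, n, hmn⟩ := this
    exact ⟨_, nsmul_pow_mul_pow_mem hinva hinvb m n x hxA, by rwa [dist_comm, dist_eq_norm]⟩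
  obtain ⟨r, rfl, hr⟩ := exists_coe_eq_abs_eq_norm x
  rw [← hr] at hx
  have hr0 : r ≠ 0 := by
    rintro rfl
    exact hx0 (AddCircle.coe_zero 1)
  rcases hr0.lt_or_gt with hneg | hpos
  · obtain ⟨m, n, hmn⟩ := H (-r) (neg_pos.2 hneg) (by rwa [← abs_of_neg hneg]) (-y)
    refine ⟨m, n, ?_⟩
    rwa [AddCircle.coe_neg, smul_neg, ← neg_sub', norm_neg] at hmn
  · exact H r hpos (by rwa [← abs_of_pos hpos]) y

open scoped Pointwise in
theorem exists_add_mem_of_infinite {a b : ℕ} (ha : 1 < a) (hb : 1 < b)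
    (h : Irrational (Real.log a / Real.log b)) {A : Set UnitAddCircle} (hA : IsClosed A)
    (hinf : A.Infinite) (hinva : ∀ x ∈ A, a • x ∈ A) (hinvb : ∀ x ∈ A, b • x ∈ A)
    (c : UnitAddCircle) : ∃ x ∈ A, x + c ∈ A := by
  have hinv (n : ℕ) (hn : ∀ x ∈ A, n • x ∈ A) : ∀ x ∈ A - A, n • x ∈ A - A := by
    rintro _ ⟨x, hx, y, hy, rfl⟩
    exact ⟨n • x, hn x hx, n • y, hn y hy, (nsmul_sub x y n).symm⟩
  have hclosed : IsClosed (A - A) := by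
    rw [← Set.sub_image_prod]
    exact ((hA.isCompact.prod hA.isCompact).image continuous_sub).isClosed
  have hacc : AccPt 0 (Filter.principal (A - A)) := by
    obtain ⟨x, hx⟩ := hinf.exists_accPt_principal
    have hxA : x ∈ A := (isClosed_iff_derivedSet_subset A).1 hA hx
    rw [accPt_principal_iff_norm] at hx ⊢
    intro ε hε
    obtain ⟨y, hyA, hyx, hy⟩ := hx ε hε
    exact ⟨y - x, Set.sub_mem_sub hyA hxA, sub_ne_zero.2 hyx, by rwa [sub_zero]⟩
  have huniv := eq_univ_of_accPt_zero ha hb h hclosed (hinv a hinva) (hinv b hinvb) hacc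
  obtain ⟨y, hy, x, hx, hyx⟩ := huniv.symm.subset (Set.mem_univ c)
  exact ⟨x, hx, by rwa [← hyx, add_sub_cancel]⟩

theorem pow_totient_nsmul_eq_self {G : Type*} [AddMonoid G] {p n : ℕ} (hpn : p.Coprime n)
    (hp : 0 < p) {x : G} (hx : n • x = 0) : p ^ n.totient • x = x := by
  have hmod := (Nat.modEq_iff_dvd' (Nat.one_le_pow _ _ hp)).1 (Nat.ModEq.pow_totient hpn).symm
  obtain ⟨c, hc⟩ := hmod
  have : p ^ n.totient = n * c + 1 := by
    have := Nat.one_le_pow n.totient p hp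
    omega
  rw [this, add_nsmul, mul_nsmul, hx, nsmul_zero, zero_add, one_nsmul]

theorem eq_univ_of_torsion_mem_derivedSet {p q : ℕ} (hp : p.Prime) (hq : q.Prime) (hpq : p ≠ q)
    {A : Set UnitAddCircle} (hA : IsClosed A)
    (hinvp : ∀ x ∈ A, p • x ∈ A) (hinvq : ∀ x ∈ A, q • x ∈ A)
    (htors : ∃ n : ℕ, n ≠ 0 ∧ ∃ x ∈ derivedSet A, n • x = 0) : A = Set.univ := by
  classical
  obtain ⟨hn0, x, hx, hnx⟩ := Nat.find_spec htors
  have hmin (m : ℕ) (hm : m < Nat.find htors) := Nat.find_min htors hm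
  set n := Nat.find htors
  have hcop (r : ℕ) (hr : r.Prime) (hinv : ∀ x ∈ A, r • x ∈ A) : r.Coprime n := by
    rw [hr.coprime_iff_not_dvd]
    rintro ⟨k, hk⟩
    have hk0 : k ≠ 0 := by
      rintro rfl
      exact hn0 hk
    refine hmin k ?_ ⟨hk0, r • x, nsmul_mem_derivedSet hr.ne_zero hinv x hx, ?_⟩
    · rw [hk]
      exact lt_mul_of_one_lt_left (Nat.pos_of_ne_zero hk0) hr.one_lt
    · rw [← mul_nsmul, ← hk, hnx]
  have hu : n.totient ≠ 0 := (Nat.totient_pos.2 (Nat.pos_of_ne_zero hn0)).ne'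
  have hinv (r : ℕ) (hr : r.Prime) (hinv : ∀ x ∈ A, r • x ∈ A) :
      ∀ z ∈ (· + x) ⁻¹' A, r ^ n.totient • z ∈ (· + x) ⁻¹' A := by
    intro z hz
    have hmem := nsmul_pow_mem hinv n.totient _ hz
    rwa [nsmul_add, pow_totient_nsmul_eq_self (hcop r hr hinv) hr.pos hnx] at hmem
  have huniv := eq_univ_of_accPt_zero (Nat.one_lt_pow hu hp.one_lt) (Nat.one_lt_pow hu hq.one_lt)
    (irrational_log_pow_div_log_pow hp hq hpq hu)
    (hA.preimage (continuous_id.add continuous_const)) (hinv p hp hinvp) (hinv q hq hinvq) ?_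
  · refine Set.eq_univ_of_forall fun y => ?_
    have : y - x ∈ (· + x) ⁻¹' A := huniv.symm.subset (Set.mem_univ _)
    simpa using this
  · rw [mem_derivedSet, accPt_principal_iff_norm] at hx
    rw [accPt_principal_iff_norm]
    intro ε hε
    obtain ⟨y, hyA, hyx, hy⟩ := hx ε hε
    exact ⟨y - x, by simpa using hyA, sub_ne_zero.2 hyx, by rwa [sub_zero]⟩

/-- A nonempty closed invariant set without torsion points contains arbitrarily long arithmetic
progressions whose step is any given torsion point of order coprime to `p` and `q`. -/
theorem exists_forall_add_nsmul_mem {p q : ℕ} (hp : p.Prime) (hq : q.Prime) (hpq : p ≠ q)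
    {E : Set UnitAddCircle} (hE : IsClosed E) (hne : E.Nonempty)
    (hinvp : ∀ x ∈ E, p • x ∈ E) (hinvq : ∀ x ∈ E, q • x ∈ E)
    (htors : ∀ n : ℕ, n ≠ 0 → ∀ x ∈ E, n • x ≠ 0)
    {t : ℕ} (ht : t ≠ 0) (hpt : p.Coprime t) (hqt : q.Coprime t)
    {c : UnitAddCircle} (hc : t • c = 0) (k : ℕ) :
    ∃ x, ∀ j ≤ k, x + j • c ∈ E := by
  have hu : t.totient ≠ 0 := (Nat.totient_pos.2 (Nat.pos_of_ne_zero ht)).ne'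
  set a := p ^ t.totient
  set b := q ^ t.totient
  have ha1 : 1 < a := Nat.one_lt_pow hu hp.one_lt
  have hb1 : 1 < b := Nat.one_lt_pow hu hq.one_lt
  have hac : a • c = c := pow_totient_nsmul_eq_self hpt hp.pos hc
  have hbc : b • c = c := pow_totient_nsmul_eq_self hqt hq.pos hc
  suffices ∃ D ⊆ E, IsClosed D ∧ D.Nonempty ∧ (∀ x ∈ D, a • x ∈ D) ∧ (∀ x ∈ D, b • x ∈ D) ∧
      ∀ x ∈ D, ∀ j ≤ k, x + j • c ∈ E by
    obtain ⟨D, -, -, ⟨x, hx⟩, -, -, h⟩ := this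
    exact ⟨x, h x hx⟩
  induction k with
  | zero =>
    refine ⟨E, subset_rfl, hE, hne, nsmul_pow_mem hinvp _, nsmul_pow_mem hinvq _, ?_⟩
    intro x hx j hj
    simpa [Nat.le_zero.1 hj] using hx
  | succ k ih =>
    obtain ⟨D, hDE, hD, ⟨x, hx⟩, hDa, hDb, hDk⟩ := ih
    have hinf : D.Infinite := by
      intro hfin
      obtain ⟨n, hn, hnx⟩ := exists_nsmul_eq_zero_of_finite hfin ha1 hDa hx
      exact htors n hn x (hDE hx) hnx
    refine ⟨D ∩ (· + c) ⁻¹' D, Set.inter_subset_left.trans hDE,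
      hD.inter (hD.preimage (continuous_id.add continuous_const)),
      exists_add_mem_of_infinite ha1 hb1 (irrational_log_pow_div_log_pow hp hq hpq hu)
        hD hinf hDa hDb c, ?_, ?_, ?_⟩
    · rintro y ⟨hy, hyc⟩
      have := hDa _ hyc
      rw [nsmul_add, hac] at this
      exact ⟨hDa y hy, this⟩
    · rintro y ⟨hy, hyc⟩
      have := hDb _ hyc
      rw [nsmul_add, hbc] at this
      exact ⟨hDb y hy, this⟩
    · rintro y ⟨hy, hyc⟩ j hj
      rcases Nat.eq_zero_or_pos j with rfl | hj0
      · simpa using hDE hy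
      · obtain ⟨i, rfl⟩ := Nat.exists_eq_add_of_le' hj0
        have := hDk _ hyc i (by omega)
        rwa [add_assoc, ← succ_nsmul'] at this

theorem exists_torsion_of_invariant {p q : ℕ} (hp : p.Prime) (hq : q.Prime) (hpq : p ≠ q)
    {E : Set UnitAddCircle} (hE : IsClosed E) (hne : E.Nonempty)
    (hinvp : ∀ x ∈ E, p • x ∈ E) (hinvq : ∀ x ∈ E, q • x ∈ E) :
    ∃ n : ℕ, n ≠ 0 ∧ ∃ x ∈ E, n • x = 0 := by
  by_contra! htors
  have h0 : (0 : UnitAddCircle) ∈ E := by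
    rw [← hE.closure_eq, Metric.mem_closure_iff]
    intro ε hε
    obtain ⟨N, hN⟩ := exists_nat_gt (1 / ε)
    set t : ℕ := p * q * N + 1 with ht
    have ht0 : (0 : ℝ) < t := by positivity
    have htε : 1 / t < ε := by
      rw [div_lt_iff₀ hε] at hN
      rw [div_lt_iff₀ ht0]
      have h1 : N ≤ t := by
        have := Nat.mul_le_mul_right N (Nat.mul_pos hp.pos hq.pos)
        omega
      have h2 : (N : ℝ) ≤ t := by exact_mod_cast h1
      nlinarith
    have hpt : p.Coprime t := by
      rw [ht, mul_assoc]
      simp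
    have hqt : q.Coprime t := by
      rw [ht, mul_comm p, mul_assoc]
      simp
    have hc : t • ((1 / t : ℝ) : UnitAddCircle) = 0 := by
      rw [← coe_natCast_mul, mul_one_div_cancel ht0.ne', AddCircle.coe_period]
    obtain ⟨x, hx⟩ := exists_forall_add_nsmul_mem hp hq hpq hE hne hinvp hinvq htors
      (Nat.succ_ne_zero _) hpt hqt hc t
    obtain ⟨r, ⟨hr0, hr1⟩, hr⟩ := AddCircle.eq_coe_Ico (-x)
    have hrt : 0 ≤ r * t := by positivity
    have hj1 := Nat.floor_le hrt
    have hj2 := Nat.lt_floor_add_one (r * t)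
    set j := ⌊r * t⌋₊
    have hjt : j ≤ t := by
      have : (j : ℝ) ≤ t := by nlinarith
      exact_mod_cast this
    refine ⟨_, hx j hjt, ?_⟩
    rw [dist_comm, dist_zero_right, ← neg_neg x, ← hr, ← coe_natCast_mul, ← AddCircle.coe_neg,
      ← AddCircle.coe_add]
    refine (norm_coe_le_abs _).trans_lt (lt_of_le_of_lt ?_ htε)
    have e : -r + j * (1 / t) = (j - r * t) / t := by field_simp; ring
    rw [e, abs_div, abs_of_pos ht0]
    refine div_le_div_of_nonneg_right ?_ ht0.le
    rw [abs_le]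
    constructor <;> linarith
  exact htors 1 one_ne_zero 0 h0 (nsmul_zero 1)

/-- Furstenberg's theorem: a closed subset of the circle `ℝ/ℤ` invariant under
multiplication by two distinct primes `p₁, p₂` is either a finite set of rational points
or the whole circle. -/
theorem furstenberg_times_p_times_q (p₁ p₂ : ℕ) (hp₁ : p₁.Prime) (hp₂ : p₂.Prime)
    (hne : p₁ ≠ p₂) (F : Set UnitAddCircle) (hF : IsClosed F)
    (h₁ : (fun x => p₁ • x) '' F ⊆ F) (h₂ : (fun x => p₂ • x) '' F ⊆ F) :
    (F.Finite ∧ ∀ x ∈ F, ∃ r : ℚ, ((r : ℝ) : UnitAddCircle) = x) ∨ F = Set.univ := by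
  rw [Set.image_subset_iff] at h₁ h₂
  rcases F.finite_or_infinite with hfin | hinf
  · refine Or.inl ⟨hfin, fun x hx => ?_⟩
    obtain ⟨n, hn, hnx⟩ := exists_nsmul_eq_zero_of_finite hfin hp₁.one_lt h₁ hx
    exact exists_rat_of_nsmul_eq_zero hn hnx
  · exact Or.inr <| eq_univ_of_torsion_mem_derivedSet hp₁ hp₂ hne hF h₁ h₂ <|
      exists_torsion_of_invariant hp₁ hp₂ hne (isClosed_derivedSet F) hinf.exists_accPt_principal
        (nsmul_mem_derivedSet hp₁.ne_zero h₁) (nsmul_mem_derivedSet hp₂.ne_zero h₂)
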